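/- Let K be a UFD of characteristic p > 0 and let d be a nonzero K-derivation of K[x,y] with d(x) and d(y) coprime. Let f ∈ K[x,y] \ K[x^p,y^p] be such that d* = 0, f − f_{(p)} is nonzero, belongs to K[x,y]^d, has minimal total degree among all nonzero polynomials of the form h − h_{(p)} (h ∈ K[x,y]) belonging to K[x,y]^d, and f − f_{(p)} is not divisible by any non-invertible element of K \ {0}. Then d = c·d_f for some invertible element c ∈ K. -/

import Mathlib

open MvPolynomial

/-!
Write `P = d x`, `Q = d y`, so that `d g = P g_x + Q g_y`, and put `F = f - f_{(p)}`, which has the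
same partial derivatives as `f`. From `P F_x + Q F_y = 0` and coprimality there is a polynomial `b`
with `F_x = b Q` and `F_y = -b P`, that is, `d_f = b d`
(`exists_factor_of_isRelPrime`). Equality of the mixed partial derivatives of `F` together with
`d* = 0` gives `d b = 0`. As `deg b < deg F` (`totalDegree_pderiv_lt`), minimality of `deg F` forces
`b = b_{(p)}`, so both partial derivatives of `b` vanish.

It follows that `b` divides `F`: with the Euler operators `E_i = x_i ∂_i`, Fermat's little theorem
shows that `E_i ^ (p - 1)` keeps exactly the monomials whose `i`-th exponent is prime to `p`, so
`F = E_0^(p-1) f + E_1^(p-1) f - E_0^(p-1) E_1^(p-1) f` (`sub_pPart_eq`), and the `E_i` commute with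
multiplication by `b`. Writing `F = b h`, the polynomial `h - h_{(p)}` is again a nonzero constant
of `d`, so minimality gives `deg b = 0`. Hence `b` is an element of `K` dividing `F`, and
therefore a unit.
-/

/-- `f_{(p)}`: the coefficient `a₀₀ ∈ K[x^p,y^p]` in the unique representation
`f = Σ_{0≤i,j<p} a_{ij} x^i y^j` with `a_{ij} ∈ K[x^p,y^p]`; concretely it is the
sum of the monomials of `f` in which both exponents are divisible by `p`. -/
noncomputable def pPart {K : Type*} [CommRing K] (p : ℕ)
    (f : MvPolynomial (Fin 2) K) : MvPolynomial (Fin 2) K :=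
  ∑ m ∈ f.support.filter (fun m => ∀ i, p ∣ m i), monomial m (coeff m f)

section
variable {K : Type*} [CommRing K]

lemma coeff_pPart (p : ℕ) (g : MvPolynomial (Fin 2) K) (m : Fin 2 →₀ ℕ) :
    coeff m (pPart p g) = if ∀ i, p ∣ m i then coeff m g else 0 := by
  classical
  unfold pPart
  simp only [coeff_sum, coeff_monomial, Finset.sum_ite_eq', Finset.mem_filter, mem_support_iff]
  split_ifs <;> simp_all

lemma pderiv_pPart (p : ℕ) [CharP K p] (i : Fin 2) (g : MvPolynomial (Fin 2) K) :
    pderiv i (pPart p g) = 0 := by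
  unfold pPart
  rw [map_sum]
  refine Finset.sum_eq_zero fun m hm => ?_
  rw [pderiv_monomial, (CharP.cast_eq_zero_iff K p (m i)).mpr ((Finset.mem_filter.mp hm).2 i)]
  simp

lemma pderiv_sub_pPart (p : ℕ) [CharP K p] (i : Fin 2) (g : MvPolynomial (Fin 2) K) :
    pderiv i (g - pPart p g) = pderiv i g := by
  rw [map_sub, pderiv_pPart, sub_zero]

lemma totalDegree_sub_pPart_le (p : ℕ) (g : MvPolynomial (Fin 2) K) :
    (g - pPart p g).totalDegree ≤ g.totalDegree := by
  refine Finset.sup_mono fun m hm => ?_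
  rw [mem_support_iff, coeff_sub, coeff_pPart] at hm
  rw [mem_support_iff]
  rintro h
  simp [h] at hm

lemma derivation_eq_pderiv (d : Derivation K (MvPolynomial (Fin 2) K) (MvPolynomial (Fin 2) K))
    (g : MvPolynomial (Fin 2) K) :
    d g = d (X 0) * pderiv 0 g + d (X 1) * pderiv 1 g := by
  have : d = d (X 0) • pderiv 0 + d (X 1) • pderiv 1 := by
    refine derivation_ext fun i => ?_
    fin_cases i <;> simp [pderiv_X]
  exact DFunLike.congr_fun this g

lemma pderiv_pderiv_comm (g : MvPolynomial (Fin 2) K) :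
    pderiv 0 (pderiv 1 g) = pderiv 1 (pderiv 0 g) := by
  ext m
  simp only [coeff_pderiv, Finsupp.add_apply]
  rw [add_right_comm]
  simp
  ring

lemma totalDegree_pderiv_lt {i : Fin 2} {g : MvPolynomial (Fin 2) K} (h : pderiv i g ≠ 0) :
    (pderiv i g).totalDegree < g.totalDegree := by
  have key : ∀ m ∈ (pderiv i g).support, m.degree < g.totalDegree := by
    intro m hm
    rw [mem_support_iff, coeff_pderiv] at hm
    have := le_totalDegree (mem_support_iff.mpr (left_ne_zero_of_mul hm))
    change (m + Finsupp.single i 1).degree ≤ _ at this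
    rw [map_add, Finsupp.degree_single] at this
    omega
  obtain ⟨m, hm⟩ := support_nonempty.mpr h
  exact (Finset.sup_lt_iff (lt_of_le_of_lt (Nat.zero_le _) (key m hm))).mpr key

/-- The Euler operator `g ↦ x_i ∂g/∂x_i`, which scales each monomial by its `i`-th exponent. -/
noncomputable def euler (i : Fin 2) (g : MvPolynomial (Fin 2) K) : MvPolynomial (Fin 2) K :=
  X i * pderiv i g

lemma coeff_euler (i : Fin 2) (g : MvPolynomial (Fin 2) K) (m : Fin 2 →₀ ℕ) :
    coeff m (euler i g) = m i * coeff m g := by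
  classical
  unfold euler
  rw [coeff_X_mul']
  split_ifs with h
  · have hle : Finsupp.single i 1 ≤ m := by
      rw [Finsupp.single_le_iff]
      exact Nat.one_le_iff_ne_zero.mpr (Finsupp.mem_support_iff.mp h)
    have h1 : (m - Finsupp.single i 1 : Fin 2 →₀ ℕ) i + 1 = m i := by
      rw [Finsupp.mem_support_iff] at h
      simp
      omega
    rw [coeff_pderiv, tsub_add_cancel_of_le hle, mul_comm, ← h1]
    push_cast
    ring
  · rw [Finsupp.notMem_support_iff.mp h]
    simp

lemma coeff_iterate_euler (i : Fin 2) (g : MvPolynomial (Fin 2) K) (m : Fin 2 →₀ ℕ) (n : ℕ) :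
    coeff m ((euler i)^[n] g) = (m i : K) ^ n * coeff m g := by
  induction n with
  | zero => simp
  | succ n ih => rw [Function.iterate_succ_apply', coeff_euler, ih]; ring

/-- Fermat's little theorem for natural numbers cast into a ring of characteristic `p`. -/
lemma natCast_pow_sub_one (p : ℕ) [hp : Fact p.Prime] [CharP K p] (n : ℕ) :
    (n : K) ^ (p - 1) = if p ∣ n then 0 else 1 := by
  split_ifs with h
  · rw [(CharP.cast_eq_zero_iff K p n).mpr h, zero_pow (Nat.sub_ne_zero_of_lt hp.out.one_lt)]
  · have h0 : (n : ZMod p) ≠ 0 := by rwa [Ne, ZMod.natCast_eq_zero_iff]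
    have := congrArg (ZMod.castHom dvd_rfl K) (ZMod.pow_card_sub_one_eq_one h0)
    simpa using this

/-- `g - g_{(p)}` keeps the monomials with some exponent prime to `p`; this is
inclusion–exclusion over which exponent it is. -/
lemma sub_pPart_eq (p : ℕ) [Fact p.Prime] [CharP K p] (g : MvPolynomial (Fin 2) K) :
    g - pPart p g = (euler 0)^[p - 1] g + (euler 1)^[p - 1] g
      - (euler 0)^[p - 1] ((euler 1)^[p - 1] g) := by
  ext m
  simp only [coeff_sub, coeff_add, coeff_iterate_euler, coeff_pPart, natCast_pow_sub_one p,
    Fin.forall_fin_two]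
  split_ifs <;> simp_all

lemma dvd_iterate_euler {i : Fin 2} {b g : MvPolynomial (Fin 2) K} (hb : pderiv i b = 0)
    (h : b ∣ g) (n : ℕ) : b ∣ (euler i)^[n] g := by
  induction n with
  | zero => exact h
  | succ n ih =>
    rw [Function.iterate_succ_apply']
    obtain ⟨q, hq⟩ := ih
    refine ⟨X i * pderiv i q, ?_⟩
    rw [hq, euler, pderiv_mul, hb]
    ring

/-- A polynomial with zero partial derivatives that divides the partial derivatives of `g`
divides `g - g_{(p)}`. -/
lemma dvd_sub_pPart (p : ℕ) [hp : Fact p.Prime] [CharP K p] {b g : MvPolynomial (Fin 2) K}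
    (hb : ∀ i, pderiv i b = 0) (h : ∀ i, b ∣ pderiv i g) : b ∣ g - pPart p g := by
  have key : ∀ i, b ∣ (euler i)^[p - 1] g := by
    intro i
    obtain ⟨n, hn⟩ := Nat.exists_eq_succ_of_ne_zero (Nat.sub_ne_zero_of_lt hp.out.one_lt)
    rw [hn, Function.iterate_succ_apply]
    exact dvd_iterate_euler (hb i) ((h i).mul_left _) n
  rw [sub_pPart_eq]
  exact dvd_sub (dvd_add (key 0) (key 1)) (dvd_iterate_euler (hb 0) (key 1) _)

/-- A vector orthogonal to a coprime pair `(P, Q)` is a multiple of `(Q, -P)`. -/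
lemma exists_factor_of_isRelPrime {R : Type*} [CommRing R] [IsDomain R] [DecompositionMonoid R]
    {P Q u v : R} (h : IsRelPrime P Q) (hne : P ≠ 0 ∨ Q ≠ 0) (huv : P * u + Q * v = 0) :
    ∃ b, u = b * Q ∧ v = -(b * P) := by
  rcases hne with hP | hQ
  · obtain ⟨b, hb⟩ := h.dvd_of_dvd_mul_left (z := v) ⟨-u, by linear_combination huv⟩
    subst hb
    exact ⟨-b, mul_left_cancel₀ hP (by linear_combination huv), by ring⟩
  · obtain ⟨b, hb⟩ := h.symm.dvd_of_dvd_mul_left (z := u) ⟨-v, by linear_combination huv⟩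
    subst hb
    exact ⟨b, by ring, mul_left_cancel₀ hQ (by linear_combination huv)⟩

end

/-- (4) ⇒ (2) of Proposition 1.  `d` a nonzero `K`-derivation of
`K[x,y]` with `d(x), d(y)` coprime, `f ∈ K[x,y] \ K[x^p,y^p]`, `d* = 0`,
`f − f_{(p)}` a nonzero constant of `d` of minimal total degree among nonzero
constants of the form `h − h_{(p)}`, and `f − f_{(p)}` not divisible by any
noninvertible nonzero element of `K`.  Then `d = c·d_f` for an invertible `c ∈ K`. -/
theorem proposition1_4_implies_2
    {K : Type*} [CommRing K] [IsDomain K] [UniqueFactorizationMonoid K]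
    (p : ℕ) [Fact p.Prime] [CharP K p]
    (d : Derivation K (MvPolynomial (Fin 2) K) (MvPolynomial (Fin 2) K))
    (hd : d ≠ 0)
    (hcop : ∀ q : MvPolynomial (Fin 2) K, q ∣ d (X 0) → q ∣ d (X 1) → IsUnit q)
    (f : MvPolynomial (Fin 2) K)
    (hf : f ∉ Algebra.adjoin K ({X 0 ^ p, X 1 ^ p} : Set (MvPolynomial (Fin 2) K)))
    (hdiv : pderiv (0 : Fin 2) (d (X 0)) + pderiv (1 : Fin 2) (d (X 1)) = 0)
    (hf₁ : f - pPart p f ≠ 0)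
    (hf₂ : d (f - pPart p f) = 0)
    (hfmin : ∀ h : MvPolynomial (Fin 2) K, h - pPart p h ≠ 0 → d (h - pPart p h) = 0 →
      (f - pPart p f).totalDegree ≤ (h - pPart p h).totalDegree)
    (hfprim : ∀ k : K, k ≠ 0 → C k ∣ (f - pPart p f) → IsUnit k) :
    ∃ c : K, IsUnit c ∧ ∀ g,
      d g = C c * (pderiv (0 : Fin 2) f * pderiv (1 : Fin 2) g
                 - pderiv (1 : Fin 2) f * pderiv (0 : Fin 2) g) := by
  have hdform := derivation_eq_pderiv d
  set P := d (X 0) with hP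
  set Q := d (X 1) with hQ
  have hPQ : P ≠ 0 ∨ Q ≠ 0 := by
    by_contra! h
    exact hd (Derivation.ext fun g => by rw [hdform, h.1, h.2]; simp)
  have hker : ∀ g : MvPolynomial (Fin 2) K, (∀ i, pderiv i g = 0) → g - pPart p g = 0 := fun g hg => by
    -- `b = 0` divides the vanishing partial derivatives, hence divides `g - g_{(p)}`
    have h := dvd_sub_pPart p (b := 0) (g := g) (fun i => map_zero _) (fun i => by rw [hg i])
    exact zero_dvd_iff.mp h
  have hdsub : ∀ g, d (g - pPart p g) = d g := fun g => by
    rw [hdform, hdform g, pderiv_sub_pPart, pderiv_sub_pPart]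
  rw [hdsub, hdform] at hf₂
  obtain ⟨b, hb0, hb1⟩ := exists_factor_of_isRelPrime (fun q h1 h2 => hcop q h1 h2) hPQ hf₂
  have hbne : b ≠ 0 := by
    rintro rfl
    exact hf₁ (hker f (Fin.forall_fin_two.mpr ⟨by simpa using hb0, by simpa using hb1⟩))
  have hdb : d b = 0 := by
    have h := pderiv_pderiv_comm f
    rw [hb0, hb1, map_neg, pderiv_mul, pderiv_mul] at h
    rw [hdform]
    linear_combination -h - b * hdiv
  have hblt : b.totalDegree < (f - pPart p f).totalDegree := by
    have aux : ∀ (i : Fin 2) (q), pderiv i f = b * q → q ≠ 0 →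
        b.totalDegree < (f - pPart p f).totalDegree := by
      intro i q h hq
      have hlt := totalDegree_pderiv_lt (i := i) (g := f - pPart p f)
        (by rw [pderiv_sub_pPart, h]; exact mul_ne_zero hbne hq)
      rw [pderiv_sub_pPart, h, totalDegree_mul_of_isDomain hbne hq] at hlt
      omega
    rcases hPQ with h | h
    · exact aux 1 (-P) (by rw [hb1]; ring) (neg_ne_zero.mpr h)
    · exact aux 0 Q hb0 h
  have hbp : b - pPart p b = 0 := by
    by_contra h
    have h1 := hfmin b h (by rw [hdsub, hdb])
    have h2 := totalDegree_sub_pPart_le p b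
    omega
  have hbd : ∀ i, pderiv i b = 0 := fun i => by
    rw [← pderiv_sub_pPart p, hbp, map_zero]
  obtain ⟨h, hh⟩ := dvd_sub_pPart p (g := f) hbd
    (Fin.forall_fin_two.mpr ⟨⟨Q, hb0⟩, ⟨-P, by rw [hb1]; ring⟩⟩)
  have hpd : ∀ i, pderiv i f = b * pderiv i h := fun i => by
    rw [← pderiv_sub_pPart p, hh, pderiv_mul, hbd]
    ring
  have hhne : h ≠ 0 := by
    rintro rfl
    exact hf₁ (by rw [hh, mul_zero])
  have hh1 : h - pPart p h ≠ 0 := fun h0 => hf₁ <| hker f fun i => by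
    rw [hpd, ← pderiv_sub_pPart p, h0, map_zero, mul_zero]
  have hh2 : d (h - pPart p h) = 0 := by
    rw [hdsub, hdform]
    refine mul_left_cancel₀ hbne ?_
    rw [hpd, hpd] at hf₂
    linear_combination hf₂
  have hdeg := (hfmin h hh1 hh2).trans (totalDegree_sub_pPart_le p h)
  rw [hh, totalDegree_mul_of_isDomain hbne hhne] at hdeg
  have hbC := totalDegree_eq_zero_iff_eq_C.mp (show b.totalDegree = 0 by omega)
  set k := coeff 0 b
  have hk : IsUnit k := hfprim k (by rintro h0; exact hbne (by rw [hbC, h0, map_zero]))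
    ⟨h, by rw [hh, ← hbC]⟩
  obtain ⟨u, hu⟩ := hk
  refine ⟨↑u⁻¹, u⁻¹.isUnit, fun g => ?_⟩
  have hub : C (↑u⁻¹ : K) * b = 1 := by
    rw [hbC, ← hu, ← C_mul, Units.inv_mul, C_1]
  rw [hdform g, hb0, hb1]
  linear_combination (-(P * pderiv 0 g + Q * pderiv 1 g)) * hub
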